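/- Let D ≥ 3 be an odd integer and n ≥ 1. If x, y, z ∈ (ℤ_D)^n are pairwise distinct and form a three-term arithmetic progression (i.e. x + z = 2y), then for every coordinate i ∈ {1,…,n}, the values x_i, y_i, z_i are either all equal or pairwise distinct. Consequently, a sunflower-free family in (ℤ_D)^n (D odd) contains no nontrivial three-term arithmetic progression. -/

import Mathlib

/-- Exactly two of `a`, `b`, `c` are equal. -/
def ExactlyTwoEq {β : Type*} (a b c : β) : Prop :=
  (a = b ∧ a ≠ c) ∨ (a = c ∧ a ≠ b) ∨ (b = c ∧ a ≠ b)

/-- A family `F ⊆ (ℤ_D)^n` is sunflower-free if for every three distinct members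
there is a coordinate where exactly two of the three entries agree. -/
def SunflowerFreeZMod (D n : ℕ) (F : Set (Fin n → ZMod D)) : Prop :=
  ∀ x ∈ F, ∀ y ∈ F, ∀ z ∈ F, x ≠ y → y ≠ z → x ≠ z →
    ∃ i : Fin n, ExactlyTwoEq (x i) (y i) (z i)

/-!
In an additive structure with cancellation and injective doubling, a progression `a + c = b + b`
in which two terms agree is constant: the cases `a = b` and `b = c` follow by cancellation, and
`a = c` is where doubling has to be injective. So no coordinate of a progression has exactly two
equal entries. The same dichotomy in the product makes a nonconstant progression a triple of distinct
points, hence a sunflower.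
-/

open Function

/-- Sunflower-freeness in a product of arbitrary sets, extending `SunflowerFreeZMod` beyond
powers of `ZMod D`: any three distinct members have a coordinate with exactly two equal entries. -/
def SunflowerFree {ι : Type*} {α : ι → Type*} (F : Set (∀ i, α i)) : Prop :=
  ∀ x ∈ F, ∀ y ∈ F, ∀ z ∈ F, x ≠ y → y ≠ z → x ≠ z → ∃ i, ExactlyTwoEq (x i) (y i) (z i)

theorem not_exactlyTwoEq_iff {β : Type*} {a b c : β} :
    ¬ ExactlyTwoEq a b c ↔ (a = b ∧ b = c) ∨ (a ≠ b ∧ b ≠ c ∧ a ≠ c) := by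
  grind [ExactlyTwoEq]

theorem all_eq_or_pairwise_ne_of_add_eq_add_self {M : Type*} [Add M] [IsCancelAdd M]
    (double_inj : Injective fun a : M ↦ a + a) {a b c : M} (h : a + c = b + b) :
    (a = b ∧ b = c) ∨ (a ≠ b ∧ b ≠ c ∧ a ≠ c) := by
  have hbc_of_hab : a = b → b = c := by
    rintro rfl
    exact (add_left_cancel h).symm
  have hab_of_hbc : b = c → a = b := by
    rintro rfl
    exact add_right_cancel h
  have hab_of_hac : a = c → a = b := by
    rintro rfl
    exact double_inj h
  by_cases hab : a = b
  · exact .inl ⟨hab, hbc_of_hab hab⟩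
  · exact .inr ⟨hab, mt hab_of_hbc hab, mt hab_of_hac hab⟩

theorem SunflowerFree.threeAPFree {ι : Type*} {M : ι → Type*} [∀ i, AddMonoid (M i)]
    [∀ i, IsCancelAdd (M i)] (double_inj : ∀ i, Injective fun a : M i ↦ a + a)
    {F : Set (∀ i, M i)} (hF : SunflowerFree F) : ThreeAPFree F := by
  intro x hx y hy z hz h
  rcases all_eq_or_pairwise_ne_of_add_eq_add_self (Injective.piMap double_inj) h with
    ⟨hxy, -⟩ | ⟨hxy, hyz, hxz⟩
  · exact hxy
  · obtain ⟨i, hi⟩ := hF x hx y hy z hz hxy hyz hxz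
    have hdichotomy := all_eq_or_pairwise_ne_of_add_eq_add_self (double_inj i) (congrFun h i)
    exact absurd hi (not_exactlyTwoEq_iff.mpr hdichotomy)

theorem add_self_injective_of_odd_card {G : Type*} [AddGroup G] (hG : Odd (Nat.card G)) :
    Injective fun a : G ↦ a + a := by
  simpa only [two_nsmul] using (Nat.coprime_two_right.mpr hG).nsmul_right_bijective.injective

theorem threeAP_coords_all_eq_or_distinct_general {ι : Type*} {M : ι → Type*}
    [∀ i, AddMonoid (M i)] [∀ i, IsCancelAdd (M i)]
    (double_inj : ∀ i, Injective fun a : M i ↦ a + a) :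
    (∀ x y z : ∀ i, M i, x + z = y + y →
      ∀ i, (x i = y i ∧ y i = z i) ∨ (x i ≠ y i ∧ y i ≠ z i ∧ x i ≠ z i)) ∧
    (∀ F : Set (∀ i, M i), SunflowerFree F → ThreeAPFree F) :=
  ⟨fun _ _ _ h i ↦ all_eq_or_pairwise_ne_of_add_eq_add_self (double_inj i) (congrFun h i),
    fun _ hF ↦ hF.threeAPFree double_inj⟩

theorem threeAP_coords_all_eq_or_distinct (D n : ℕ) (hD : 3 ≤ D) (hodd : Odd D)
    (hn : 1 ≤ n) :
    (∀ x y z : Fin n → ZMod D, x ≠ y → y ≠ z → x ≠ z → x + z = y + y →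
      ∀ i : Fin n, (x i = y i ∧ y i = z i) ∨
        (x i ≠ y i ∧ y i ≠ z i ∧ x i ≠ z i)) ∧
    (∀ F : Set (Fin n → ZMod D), SunflowerFreeZMod D n F →
      ¬ ∃ x ∈ F, ∃ y ∈ F, ∃ z ∈ F, x ≠ y ∧ y ≠ z ∧ x ≠ z ∧ x + z = y + y) := by
  obtain ⟨coords, apFree⟩ := threeAP_coords_all_eq_or_distinct_general
    fun _ : Fin n ↦ add_self_injective_of_odd_card (G := ZMod D) (by rwa [Nat.card_zmod])
  exact ⟨fun x y z _ _ _ ↦ coords x y z,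
    fun F hF ⟨_, hx, _, hy, _, hz, hxy, _, _, h⟩ ↦ hxy (apFree F hF hx hy hz h)⟩
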